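/- Fix a terminal set K of size k and a collection 𝒞 of subsets of K such that the cuts (U, K\U) for U ∈ 𝒞 are pairwise distinct (no two members of 𝒞 are equal or complementary in K). Then there exists a weighted graph G with terminal set K such that every weighted graph H whose vertex set contains K and which satisfies h_K^H(U) = h_K^G(U) for every U ∈ 𝒞 has at least |𝒞|^{1/2} vertices. -/

import Mathlib

open scoped Classical

/-- A weighted graph with a distinguished embedded set of terminals indexed by `κ`:
a finite vertex type `V`, an embedding `ι : κ ↪ V` of the terminals, and a symmetric
nonnegative capacity function `c` on pairs of vertices. -/
structure WeightedGraph (κ : Type) where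
  V : Type
  [fintypeV : Fintype V]
  ι : κ ↪ V
  c : V → V → ℝ
  symm : ∀ u v, c u v = c v u
  nonneg : ∀ u v, 0 ≤ c u v

namespace WeightedGraph

variable {κ : Type}

instance (G : WeightedGraph κ) : Fintype G.V := G.fintypeV

/-- The cut function `h_G(A) = Σ_{u ∈ A, v ∉ A} c(u,v)`. -/
noncomputable def cutval (G : WeightedGraph κ) (A : Finset G.V) : ℝ :=
  ∑ u ∈ A, ∑ v ∈ Aᶜ, G.c u v

/-- The vertex sets realizing the terminal partition `(U, K \ U)`. -/
noncomputable def cutSets (G : WeightedGraph κ) (U : Finset κ) : Finset (Finset G.V) :=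
  Finset.univ.filter fun A => ∀ x : κ, G.ι x ∈ A ↔ x ∈ U

theorem cutSets_nonempty (G : WeightedGraph κ) (U : Finset κ) : (G.cutSets U).Nonempty := by
  refine ⟨U.image G.ι, ?_⟩
  simp [cutSets, Finset.mem_image, G.ι.injective.eq_iff]

/-- The terminal cut function `h_K^G(U) = min { h_G(A) : A ∩ K = U }`. -/
noncomputable def termCut (G : WeightedGraph κ) (U : Finset κ) : ℝ :=
  (G.cutSets U).inf' (G.cutSets_nonempty U) G.cutval

/-- `H` is a mimicking network for `(G, K)`: all minimum terminal cut values agree. -/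
def IsMimicking (G H : WeightedGraph κ) : Prop :=
  ∀ U : Finset κ, H.termCut U = G.termCut U

/-- `H` is a quotient (contraction) of `G` along the surjection `f`: terminals map to
terminals, and capacities between distinct classes are sums of the original capacities. -/
def IsQuotient (G H : WeightedGraph κ) (f : G.V → H.V) : Prop :=
  Function.Surjective f ∧ (∀ x : κ, f (G.ι x) = H.ι x) ∧
    ∀ y z : H.V, y ≠ z →
      H.c y z = ∑ u ∈ Finset.univ.filter (fun u => f u = y),
        ∑ v ∈ Finset.univ.filter (fun v => f v = z), G.c u v

end WeightedGraph

/-!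
A minimum cut of `H` is the sum of the capacities `c(u,v)` over the ordered pairs it separates, so
the vector of the values `h_K^H(U)`, `U ∈ 𝒞`, lies in the span of at most `|V(H)| (|V(H)| - 1)`
vectors with entries in `{0, 1}`. It therefore suffices to find a graph `G` whose vector of terminal
cuts avoids all the finitely many proper subspaces spanned by fewer than `|𝒞|` such vectors
(`|𝒞| - 1` if `∅` or `K` lies in `𝒞`).

Take for `G` a union of stars whose leaves are the terminals. A star with leaf weights `w`
contributes `min (w(U), w(K \ U)) = (w(K) - |w(U) - w(K \ U)|) / 2`. The vectors of terminal cuts of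
such graphs form an additive monoid, so it is enough that they span the whole space. They do, since
the absolute value has a kink at `0`: if `w(U) = w(K \ U)` only for the cut `{S, K \ S}`, then a
second difference in the direction of one coordinate of `w` is the basis vector of `S`. Both the
weight `w` and the point off the proper subspaces are found by the same genericity principle:
finitely many nonzero additive maps into a torsion-free group are all nonzero at a common point.
-/

section Genericity

theorem subsingleton_setOf_add_nsmul_eq_zero {A : Type*} [AddGroup A] [IsAddTorsionFree A]
    {a b : A} (h : a ≠ 0 ∨ b ≠ 0) : {n : ℕ | a + n • b = 0}.Subsingleton := by
  intro n hn m hm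
  have hb : b ≠ 0 := by
    rintro rfl
    exact h.elim (fun ha => ha (by simpa using hn)) fun h0 => h0 rfl
  exact injective_nsmul_iff_not_isOfFinAddOrder.mpr (not_isOfFinAddOrder_of_isAddTorsionFree hb)
    (add_left_cancel (Eq.trans hn hm.symm))

theorem exists_forall_addMonoidHom_ne_zero {M A ι : Type*} [AddMonoid M] [AddGroup A]
    [IsAddTorsionFree A] (φ : ι → M →+ A) (s : Finset ι) (h : ∀ i ∈ s, ∃ m, φ i m ≠ 0) :
    ∃ m, ∀ i ∈ s, φ i m ≠ 0 := by
  induction s using Finset.induction_on with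
  | empty => exact ⟨0, by simp⟩
  | insert j s _ ih =>
    obtain ⟨x, hx⟩ := ih fun i hi => h i (Finset.mem_insert_of_mem hi)
    obtain ⟨y, hy⟩ := h j (Finset.mem_insert_self j s)
    have hfin : (⋃ i ∈ insert j s, {n : ℕ | φ i y + n • φ i x = 0}).Finite := by
      refine (insert j s).finite_toSet.biUnion fun i hi => Set.Subsingleton.finite ?_
      rcases Finset.mem_insert.mp hi with rfl | hi
      · exact subsingleton_setOf_add_nsmul_eq_zero (.inl hy)
      · exact subsingleton_setOf_add_nsmul_eq_zero (.inr (hx i hi))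
    obtain ⟨n, hn⟩ := hfin.exists_notMem
    refine ⟨y + n • x, fun i hi hzero => hn (Set.mem_biUnion hi ?_)⟩
    simpa using hzero

theorem exists_mem_addSubmonoid_forall_notMem {K E : Type*} [DivisionRing K] [CharZero K]
    [AddCommGroup E] [Module K E] {M : AddSubmonoid E}
    (hM : Submodule.span K (M : Set E) = ⊤) {s : Set (Submodule K E)} (hs : s.Finite)
    (hne : ∀ W ∈ s, W ≠ ⊤) : ∃ v ∈ M, ∀ W ∈ s, v ∉ W := by
  choose! f hf0 hf using fun (W : Submodule K E) (hW : W ∈ s) =>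
    W.exists_le_ker_of_lt_top (lt_top_iff_ne_top.mpr (hne W hW))
  have hfM : ∀ W ∈ hs.toFinset, ∃ v : M, f W v ≠ 0 := by
    intro W hW
    by_contra! hzero
    exact hf0 W (hs.mem_toFinset.mp hW) (LinearMap.ext_on hM fun v hv => hzero ⟨v, hv⟩)
  obtain ⟨⟨v, hvM⟩, hv⟩ := exists_forall_addMonoidHom_ne_zero
    (fun W => (f W).toAddMonoidHom.comp M.subtype) hs.toFinset hfM
  exact ⟨v, hvM, fun W hW hvW => hv W (hs.mem_toFinset.mpr hW) (hf W hW hvW)⟩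

end Genericity

section IndicatorSpan

variable {ι : Type*}

/-- The space of vectors spanned by the indicator vectors of the members of a set family `F`. The
cut values of a small graph lie in such a space with `F` small. -/
noncomputable def indicatorSpan (F : Finset (Finset ι)) : Submodule ℝ (ι → ℝ) :=
  Submodule.span ℝ (Set.range fun t : F => (t : Set ι).indicator 1)

theorem indicator_mem_indicatorSpan {F : Finset (Finset ι)} {t : Finset ι} (ht : t ∈ F) :
    (t : Set ι).indicator (1 : ι → ℝ) ∈ indicatorSpan F :=
  Submodule.subset_span ⟨⟨t, ht⟩, rfl⟩

theorem indicatorSpan_ne_top [Fintype ι] {F : Finset (Finset ι)}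
    (hF : F.card < Fintype.card ι) : indicatorSpan F ≠ ⊤ := by
  intro htop
  have hrank : Module.finrank ℝ (indicatorSpan F) ≤ F.card :=
    (finrank_range_le_card _).trans_eq (Fintype.card_coe F)
  rw [htop, finrank_top, Module.finrank_fintype_fun_eq_card] at hrank
  exact hF.not_ge hrank

end IndicatorSpan

section StarCut

variable {κ : Type*} [Fintype κ]

/-- The minimum terminal cut at `U` of a star whose leaves are the terminals, `w x` being the
capacity of the edge to `x`. Integral weights suffice for the construction. -/
noncomputable def starCut (w : κ → ℕ) (U : Finset κ) : ℕ :=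
  min (∑ x ∈ U, w x) (∑ x ∈ Uᶜ, w x)

/-- The signed difference `w(U) - w(K \ U)`, as a homomorphism in the weight `w`. Its zeros are the
points at which `starCut · U` fails to be linear. -/
noncomputable def imbalance (U : Finset κ) : (κ → ℕ) →+ ℤ where
  toFun w := (∑ x ∈ U, w x : ℕ) - (∑ x ∈ Uᶜ, w x : ℕ)
  map_zero' := by simp
  map_add' v w := by
    simp only [Pi.add_apply, Finset.sum_add_distrib]
    push_cast
    ring

theorem imbalance_apply (U : Finset κ) (w : κ → ℕ) :
    imbalance U w = (∑ x ∈ U, w x : ℕ) - (∑ x ∈ Uᶜ, w x : ℕ) :=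
  rfl

theorem imbalance_compl (U : Finset κ) (w : κ → ℕ) : imbalance Uᶜ w = -imbalance U w := by
  simp only [imbalance_apply, compl_compl, neg_sub]

theorem imbalance_single (U : Finset κ) (x : κ) :
    imbalance U (Pi.single x 1) = if x ∈ U then 1 else -1 := by
  by_cases hx : x ∈ U <;> simp [imbalance_apply, hx]

theorem exists_mem_iff_mem_of_ne_of_ne_compl {S U : Finset κ} (hS : S.Nonempty)
    (hS' : Sᶜ.Nonempty) (hU : U ≠ S) (hU' : U ≠ Sᶜ) : ∃ x ∈ S, ∃ y ∈ Sᶜ, (x ∈ U ↔ y ∈ U) := by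
  by_contra! hsep
  obtain ⟨x₀, hx₀⟩ := hS
  obtain ⟨y₀, hy₀⟩ := hS'
  by_cases hx₀U : x₀ ∈ U
  · exact hU (by grind [Finset.mem_compl])
  · exact hU' (by grind [Finset.mem_compl])

theorem exists_imbalance_eq_zero_iff {S : Finset κ} (hS : S.Nonempty) (hS' : Sᶜ.Nonempty) :
    ∃ b : κ → ℕ, ∀ U, imbalance U b = 0 ↔ U = S ∨ U = Sᶜ := by
  let others : Finset (Finset κ) := {U | U ≠ S ∧ U ≠ Sᶜ}
  have hothers : ∀ U ∈ others, ∃ b : AddMonoidHom.mker (imbalance S), imbalance U b ≠ 0 := by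
    intro U hU
    obtain ⟨hUS, hUS'⟩ := (Finset.mem_filter.mp hU).2
    obtain ⟨x, hx, y, hy, hxy⟩ := exists_mem_iff_mem_of_ne_of_ne_compl hS hS' hUS hUS'
    refine ⟨⟨Pi.single x 1 + Pi.single y 1, ?_⟩, ?_⟩
    · simp [AddMonoidHom.mem_mker, imbalance_single, hx, Finset.mem_compl.mp hy]
    · by_cases hyU : y ∈ U <;> simp [imbalance_single, hxy, hyU]
  obtain ⟨⟨b, hbS⟩, hb⟩ := exists_forall_addMonoidHom_ne_zero
    (fun U => (imbalance U).comp (AddMonoidHom.mker (imbalance S)).subtype) others hothers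
  refine ⟨b, fun U => ⟨fun hU => ?_, ?_⟩⟩
  · by_contra! hne
    exact hb U (by simpa [others] using hne) hU
  · rintro (rfl | rfl)
    · exact hbS
    · rw [imbalance_compl, hbS, neg_zero]

theorem starCut_second_difference (w : κ → ℕ) (x : κ) (U : Finset κ) :
    2 * starCut (w + Pi.single x 1) U = starCut w U + starCut (w + Pi.single x 1 + Pi.single x 1) U
      + if imbalance U (w + Pi.single x 1) = 0 then 1 else 0 := by
  by_cases hx : x ∈ U <;>
    simp only [starCut, imbalance_apply, Pi.add_apply, Finset.sum_add_distrib,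
      Finset.sum_pi_single', Finset.mem_compl, hx, not_true_eq_false, not_false_eq_true, if_true,
      if_false] <;>
    grind

theorem exists_imbalance_add_single_eq_zero_iff {S : Finset κ} (hS : S.Nonempty)
    (hS' : Sᶜ.Nonempty) :
    ∃ (w : κ → ℕ) (x : κ), ∀ U, imbalance U (w + Pi.single x 1) = 0 ↔ U = S ∨ U = Sᶜ := by
  obtain ⟨b, hb⟩ := exists_imbalance_eq_zero_iff hS hS'
  have hb0 : b ≠ 0 := by
    rintro rfl
    rcases (hb ∅).mp (map_zero _) with h | h
    · exact hS.ne_empty h.symm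
    · exact hS'.ne_empty h.symm
  obtain ⟨x, hx⟩ := Function.ne_iff.mp hb0
  have hle : Pi.single x 1 ≤ b := by
    intro y
    rcases eq_or_ne y x with rfl | hyx
    · simpa [Nat.one_le_iff_ne_zero] using hx
    · simp [hyx]
  refine ⟨b - Pi.single x 1, x, ?_⟩
  rw [tsub_add_cancel_of_le hle]
  exact hb

theorem span_range_starCut_eq_top {D : Finset (Finset κ)}
    (hD : ∀ S ∈ D, S.Nonempty ∧ Sᶜ.Nonempty) (hcompl : ∀ U ∈ D, ∀ V ∈ D, V ≠ Uᶜ) :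
    Submodule.span ℝ (Set.range fun (w : κ → ℕ) (U : D) => (starCut w U : ℝ)) = ⊤ := by
  rw [eq_top_iff, ← (Pi.basisFun ℝ D).span_eq, Submodule.span_le]
  rintro _ ⟨S, rfl⟩
  obtain ⟨w, x, hw⟩ := exists_imbalance_add_single_eq_zero_iff (hD S S.2).1 (hD S S.2).2
  let v (w : κ → ℕ) (U : D) : ℝ := starCut w U
  have hv : ∀ w, v w ∈ Submodule.span ℝ (Set.range v) :=
    fun w => Submodule.subset_span (Set.mem_range_self w)
  have hsingle : Pi.basisFun ℝ D S =
      (2 : ℝ) • v (w + Pi.single x 1) - v w - v (w + Pi.single x 1 + Pi.single x 1) := by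
    funext U
    have hU := congrArg (Nat.cast (R := ℝ)) (starCut_second_difference w x U)
    have hiff : imbalance U.1 (w + Pi.single x 1) = 0 ↔ U = S := by
      rw [hw, or_iff_left (hcompl S S.2 U U.2), Subtype.ext_iff]
    simp only [hiff] at hU
    push_cast at hU
    simp only [Pi.basisFun_apply, Pi.single_apply, Pi.sub_apply, Pi.smul_apply, smul_eq_mul, v]
    linarith
  rw [hsingle]
  exact sub_mem (sub_mem (Submodule.smul_mem _ _ (hv _)) (hv _)) (hv _)

end StarCut

theorem compl_disjSum {α β : Type*} [Fintype α] [Fintype β] [DecidableEq α] [DecidableEq β]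
    [DecidableEq (α ⊕ β)] (s : Finset α) (t : Finset β) : (s.disjSum t)ᶜ = sᶜ.disjSum tᶜ := by
  ext (a | b) <;> simp

namespace WeightedGraph

variable {κ : Type}

theorem mem_cutSets {G : WeightedGraph κ} {U : Finset κ} {A : Finset G.V} :
    A ∈ G.cutSets U ↔ ∀ x, G.ι x ∈ A ↔ x ∈ U := by
  simp [cutSets]

theorem cutval_eq_sum_offDiag (G : WeightedGraph κ) (A : Finset G.V) :
    G.cutval A = ∑ p ∈ Finset.univ.offDiag, if p.1 ∈ A ∧ p.2 ∉ A then G.c p.1 p.2 else 0 := by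
  rw [cutval, ← Finset.sum_product', ← Finset.sum_filter]
  congr 1
  ext ⟨u, v⟩
  simp only [Finset.mem_product, Finset.mem_compl, Finset.mem_filter, Finset.mem_offDiag]
  grind

theorem exists_cutval_mem_indicatorSpan {ι : Type*} [Finite ι] (G : WeightedGraph κ)
    (A : ι → Finset G.V) :
    ∃ F : Finset (Finset ι), F.card ≤ Fintype.card G.V * (Fintype.card G.V - 1) ∧
      (fun i => G.cutval (A i)) ∈ indicatorSpan F := by
  have := Fintype.ofFinite ι
  let separated (p : G.V × G.V) : Finset ι := {i | p.1 ∈ A i ∧ p.2 ∉ A i}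
  have hsum : (fun i => G.cutval (A i)) =
      ∑ p ∈ Finset.univ.offDiag, G.c p.1 p.2 • (separated p : Set ι).indicator (1 : ι → ℝ) := by
    funext i
    simp [cutval_eq_sum_offDiag, Set.indicator_apply, separated]
  refine ⟨Finset.univ.offDiag.image separated, ?_, ?_⟩
  · refine Finset.card_image_le.trans_eq ?_
    rw [Finset.offDiag_card, Finset.card_univ, Nat.mul_sub_one]
  · rw [hsum]
    exact Submodule.sum_mem _ fun p hp => Submodule.smul_mem _ _ <|
      indicator_mem_indicatorSpan (Finset.mem_image_of_mem _ hp)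

theorem exists_termCut_mem_indicatorSpan {ι : Type*} [Finite ι] (G : WeightedGraph κ)
    (U : ι → Finset κ) :
    ∃ F : Finset (Finset ι), F.card ≤ Fintype.card G.V * (Fintype.card G.V - 1) ∧
      (fun i => G.termCut (U i)) ∈ indicatorSpan F := by
  choose A _ hA using fun i => Finset.exists_mem_eq_inf' (G.cutSets_nonempty (U i)) G.cutval
  simpa only [termCut, hA] using G.exists_cutval_mem_indicatorSpan A

section StarNetwork

variable [Fintype κ] {I : Type} [Fintype I]

/-- The bipartite graph with one additional vertex per `i : I`, joined to each terminal `x` by an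
edge of capacity `w i x`: the stars with weights `w i`, glued along the terminals. -/
abbrev starNetwork (w : I → κ → ℕ) : WeightedGraph κ where
  V := κ ⊕ I
  ι := .inl
  c
    | .inl x, .inr i => w i x
    | .inr i, .inl x => w i x
    | _, _ => 0
  symm := by rintro (x | i) (y | j) <;> rfl
  nonneg := by rintro (x | i) (y | j) <;> simp

theorem cutval_starNetwork (w : I → κ → ℕ) (U : Finset κ) (B : Finset I) :
    (starNetwork w).cutval (U.disjSum B) =
      ∑ i, if i ∈ B then (∑ x ∈ Uᶜ, w i x : ℝ) else ∑ x ∈ U, (w i x : ℝ) := by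
  calc (starNetwork w).cutval (U.disjSum B)
      = ∑ x ∈ U, ∑ i ∈ Bᶜ, (w i x : ℝ) + ∑ i ∈ B, ∑ x ∈ Uᶜ, (w i x : ℝ) := by
        simp [cutval, compl_disjSum, Finset.sum_disjSum]
    _ = ∑ i, if i ∈ B then (∑ x ∈ Uᶜ, w i x : ℝ) else ∑ x ∈ U, (w i x : ℝ) := by
        rw [Finset.sum_comm, add_comm, Finset.sum_ite]
        simp [Finset.compl_eq_univ_sdiff, Finset.filter_notMem_eq_sdiff]

theorem termCut_starNetwork (w : I → κ → ℕ) (U : Finset κ) :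
    (starNetwork w).termCut U = ∑ i, (starCut (w i) U : ℝ) := by
  apply le_antisymm
  · let B : Finset I := {i | ∑ x ∈ Uᶜ, w i x ≤ ∑ x ∈ U, w i x}
    have hB : U.disjSum B ∈ (starNetwork w).cutSets U :=
      mem_cutSets.mpr fun _ => Finset.inl_mem_disjSum
    refine (Finset.inf'_le _ hB).trans_eq ?_
    rw [cutval_starNetwork]
    refine Finset.sum_congr rfl fun i _ => ?_
    simp only [starCut, B, Finset.mem_filter_univ]
    split_ifs with h
    · rw [min_eq_right h, Nat.cast_sum]
    · rw [min_eq_left (le_of_not_ge h), Nat.cast_sum]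
  · refine Finset.le_inf' _ _ fun A hA => ?_
    have hAU : A = U.disjSum A.toRight := by
      refine Finset.eq_disjSum_iff.mpr ⟨?_, rfl⟩
      ext x
      exact Finset.mem_toLeft.trans (mem_cutSets.mp hA x)
    rw [hAU, cutval_starNetwork]
    refine Finset.sum_le_sum fun i _ => ?_
    rw [starCut]
    split_ifs
    · exact_mod_cast min_le_right _ _
    · exact_mod_cast min_le_left _ _

end StarNetwork

theorem exists_termCut_eq_of_mem_closure [Fintype κ] {D : Finset (Finset κ)} {v : D → ℝ}
    (hv : v ∈ AddSubmonoid.closure (Set.range fun (w : κ → ℕ) (U : D) => (starCut w U : ℝ))) :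
    ∃ G : WeightedGraph κ, ∀ U : D, G.termCut U = v U := by
  suffices h : ∃ (I : Type) (_ : Fintype I) (w : I → κ → ℕ),
      ∀ U : D, v U = ∑ i, (starCut (w i) U : ℝ) by
    obtain ⟨I, _, w, hw⟩ := h
    exact ⟨starNetwork w, fun U => by rw [termCut_starNetwork, hw]⟩
  induction hv using AddSubmonoid.closure_induction with
  | mem v hv =>
    obtain ⟨w, rfl⟩ := hv
    exact ⟨Unit, inferInstance, fun _ => w, by simp⟩
  | zero => exact ⟨Empty, inferInstance, Empty.elim, by simp⟩
  | add v₁ v₂ _ _ h₁ h₂ =>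
    obtain ⟨I, _, w₁, hw₁⟩ := h₁
    obtain ⟨J, _, w₂, hw₂⟩ := h₂
    exact ⟨I ⊕ J, inferInstance, Sum.elim w₁ w₂, by simp [hw₁, hw₂]⟩

theorem exists_termCut_notMem_indicatorSpan [Fintype κ] {D : Finset (Finset κ)}
    (hD : ∀ S ∈ D, S.Nonempty ∧ Sᶜ.Nonempty) (hcompl : ∀ U ∈ D, ∀ V ∈ D, V ≠ Uᶜ) :
    ∃ G : WeightedGraph κ, ∀ F : Finset (Finset D), F.card < D.card →
      (fun U : D => G.termCut U) ∉ indicatorSpan F := by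
  let M := AddSubmonoid.closure (Set.range fun (w : κ → ℕ) (U : D) => (starCut w U : ℝ))
  have hM : Submodule.span ℝ (M : Set (D → ℝ)) = ⊤ :=
    top_unique <| (span_range_starCut_eq_top hD hcompl).ge.trans <|
      Submodule.span_mono AddSubmonoid.subset_closure
  let small : Set (Finset (Finset D)) := {F | F.card < D.card}
  obtain ⟨v, hvM, hv⟩ := exists_mem_addSubmonoid_forall_notMem hM
    (small.toFinite.image indicatorSpan) <| by
      rintro _ ⟨F, hF, rfl⟩
      exact indicatorSpan_ne_top (hF.trans_eq (Fintype.card_coe D).symm)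
  obtain ⟨G, hG⟩ := exists_termCut_eq_of_mem_closure hvM
  exact ⟨G, fun F hF => funext hG ▸ hv _ (Set.mem_image_of_mem _ hF)⟩

theorem exists_forall_card_le_of_termCut_eq [Fintype κ] {D : Finset (Finset κ)}
    (hD : ∀ S ∈ D, S.Nonempty ∧ Sᶜ.Nonempty) (hcompl : ∀ U ∈ D, ∀ V ∈ D, V ≠ Uᶜ) :
    ∃ G : WeightedGraph κ, ∀ H : WeightedGraph κ, (∀ U ∈ D, H.termCut U = G.termCut U) →
      D.card ≤ Fintype.card H.V * (Fintype.card H.V - 1) := by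
  obtain ⟨G, hG⟩ := exists_termCut_notMem_indicatorSpan hD hcompl
  refine ⟨G, fun H hHG => ?_⟩
  obtain ⟨F, hF, hmem⟩ := H.exists_termCut_mem_indicatorSpan fun U : D => (U : Finset κ)
  by_contra! hlt
  refine hG F (hF.trans_lt hlt) ?_
  simpa only [hHG _ (Subtype.prop _)] using hmem

end WeightedGraph

theorem card_le_card_filter_nonempty_add_one {κ : Type*} [Fintype κ] {𝒞 : Finset (Finset κ)}
    (hC : ∀ U ∈ 𝒞, ∀ V ∈ 𝒞, V ≠ Uᶜ) :
    𝒞.card ≤ {U ∈ 𝒞 | U.Nonempty ∧ Uᶜ.Nonempty}.card + 1 := by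
  rw [← Finset.card_filter_add_card_filter_not (s := 𝒞) fun U => U.Nonempty ∧ Uᶜ.Nonempty]
  gcongr
  refine Finset.card_le_one.mpr fun U hU V hV => ?_
  simp only [Finset.mem_filter, not_and_or, Finset.not_nonempty_iff_eq_empty,
    Finset.compl_eq_empty_iff] at hU hV
  obtain ⟨hU, rfl | rfl⟩ := hU <;> obtain ⟨hV, rfl | rfl⟩ := hV
  · rfl
  · exact absurd Finset.compl_empty.symm (hC _ hU _ hV)
  · exact absurd Finset.compl_univ.symm (hC _ hU _ hV)
  · rfl

/-- if `𝒞` is a collection of subsets of `K` inducing pairwise distinct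
cuts `(U, K \ U)` (no two members equal or complementary), then there is a weighted
graph `G` such that every weighted graph containing `K` that exactly preserves the
minimum terminal cut values of all `U ∈ 𝒞` has at least `|𝒞|^(1/2)` vertices. -/
theorem partial_cut_sparsifier_lower_bound (κ : Type) [Fintype κ]
    (𝒞 : Finset (Finset κ))
    (hC : ∀ U ∈ 𝒞, ∀ V ∈ 𝒞, V ≠ Uᶜ) :
    ∃ G : WeightedGraph κ, ∀ H : WeightedGraph κ,
      (∀ U ∈ 𝒞, H.termCut U = G.termCut U) →
        Real.sqrt (𝒞.card : ℝ) ≤ (Fintype.card H.V : ℝ) := by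
  let D : Finset (Finset κ) := {U ∈ 𝒞 | U.Nonempty ∧ Uᶜ.Nonempty}
  have hD : ∀ U ∈ D, U ∈ 𝒞 := fun U hU => (Finset.mem_filter.mp hU).1
  obtain ⟨G, hG⟩ := WeightedGraph.exists_forall_card_le_of_termCut_eq
    (fun U hU => (Finset.mem_filter.mp hU).2) fun U hU V hV => hC U (hD U hU) V (hD V hV)
  refine ⟨G, fun H hHG => ?_⟩
  rcases 𝒞.eq_empty_or_nonempty with rfl | ⟨U, hU⟩
  · simp
  have hκ : Nonempty κ := not_isEmpty_iff.mp fun _ => hC U hU U hU (Subsingleton.elim _ _)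
  have hpos : 1 ≤ Fintype.card H.V := Fintype.card_pos_iff.mpr (hκ.map H.ι)
  have hsq : 𝒞.card ≤ Fintype.card H.V ^ 2 := by
    calc 𝒞.card
        ≤ D.card + 1 := card_le_card_filter_nonempty_add_one hC
      _ ≤ Fintype.card H.V * (Fintype.card H.V - 1) + Fintype.card H.V :=
        add_le_add (hG H fun U hU => hHG U (hD U hU)) hpos
      _ = Fintype.card H.V ^ 2 := by rw [← Nat.mul_succ, Nat.succ_eq_add_one,
          Nat.sub_add_cancel hpos, sq]
  exact Real.sqrt_le_iff.mpr ⟨by positivity, mod_cast hsq⟩
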